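/- arXiv:2001.02906 — 2 statements merged into one kernel-verified Lean document; each statement's English description precedes it below -/
import Mathlib

section
/- Let n ≥ 1, m ≥ 1, let c(1),…,c(n) be strictly positive reals and d(1),…,d(n−1) be nonnegative reals with L := ∑_{h=1}^{n−1} d(h) > 0, and set δ = (max_{1≤i≤n} c(i))/L. Let T(r,i) ≥ 0 satisfy ∑_{r=1}^{m} T(r,i) ≥ c(i) for every module i; for each robot r let σ(r) ∈ {0,…,n} be such that T(r,i) = 0 whenever i > σ(r), with σ(1) ≤ … ≤ σ(m). Let M be a real number with M ≥ 2·L and, for every r, M ≥ ∑_{i=1}^{n} T(r,i) + 2·∑_{h=1}^{σ(r)−1} d(h). Then f(1,n,m) ≤ (1 + δ/2)·M. (Theorem 1: there exists an integer solution whose makespan is at most (1 + δ/2) times the optimal makespan.) -/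
/-!
Since `M ≥ 2L`, the term `(δ/2) M` is at least `cmax = max c`, so it suffices to produce an integer
solution of makespan at most `M + cmax`.

Write `B r = M - 2 ∑_{h < σ r} d h` for the covering time available to robot `r` in the fractional
solution. Process the robots in order of increasing `σ`; robot `r` keeps taking modules until
either it has at least `B r` of covering work or it reaches module `σ r` (`exists_endpoint`). Its
covering work then exceeds `B r` by at most one module, so its tour costs at most `M + cmax`.

The invariant is that the work left after robot `k` is at most `∑_{r > k} B r`
(`exists_endpoints`). A robot stopped by its budget preserves it by subtraction; a robot stopped
at `σ k` restores it because in the fractional solution the modules beyond `σ k` are covered only by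
robots with index larger than `k` (`tail_work_le`). After robot `m` no work is left, and as every
module has positive work, all modules are covered.
-/

/-- Cost of the tour of a robot assigned the interval of modules `{a+1, …, b}`
(empty if `b ≤ a`): total coverage time plus twice the travel time from the
depot `d₁` to the doorway of module `b`. -/
noncomputable def tourCost (c d : ℕ → ℝ) (a b : ℕ) : ℝ :=
  if a < b then (∑ h ∈ Finset.Icc (a+1) b, c h) + 2 * ∑ h ∈ Finset.Icc 1 (b-1), d h else 0

/-- Makespan of the integer solution with split endpoints `e`: robot `r`
(for `1 ≤ r ≤ k`) covers modules `{e (r-1) + 1, …, e r}`. -/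
noncomputable def intMakespan (c d : ℕ → ℝ) (k : ℕ) (e : ℕ → ℕ) : ℝ :=
  (Finset.Icc 1 k).fold max 0 (fun r => tourCost c d (e (r-1)) (e r))

/-- `f c d i j k`: minimum makespan of an integer solution in which `k` robots
cover the modules `{i, …, j}`, splitting them into `k` consecutive (possibly
empty) sub-intervals. -/
noncomputable def f (c d : ℕ → ℝ) (i j k : ℕ) : ℝ :=
  sInf { M : ℝ | ∃ e : ℕ → ℕ, Monotone e ∧ e 0 = i - 1 ∧ e k = j ∧ M = intMakespan c d k e }

lemma sum_Icc_split (g : ℕ → ℝ) {a b k : ℕ} (hab : a ≤ b) (hbk : b ≤ k) :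
    ∑ i ∈ Finset.Icc (a + 1) b, g i + ∑ i ∈ Finset.Icc (b + 1) k, g i =
      ∑ i ∈ Finset.Icc (a + 1) k, g i := by
  have h : ∀ x y : ℕ, Finset.Icc (x + 1) y = Finset.Ioc x y := by
    intro x y; ext z; simp
  rw [h, h, h]
  exact Finset.sum_Ioc_consecutive g hab hbk

/-- One greedy step: starting after module `a`, stop at the first endpoint where the collected work
is at least `B`, or at `s` if there is none; the work overshoots `B` by at most one module. -/
lemma exists_endpoint (c : ℕ → ℝ) (C B : ℝ) (hC : 0 ≤ C) (hB : 0 ≤ B) (a s : ℕ) (has : a ≤ s)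
    (hc : ∀ i ∈ Finset.Icc 1 s, c i ≤ C) :
    ∃ b, a ≤ b ∧ b ≤ s ∧ ∑ i ∈ Finset.Icc (a + 1) b, c i ≤ B + C ∧
      (b = s ∨ B ≤ ∑ i ∈ Finset.Icc (a + 1) b, c i) := by
  induction s, has using Nat.le_induction with
  | base => exact ⟨a, le_rfl, le_rfl, by simp; linarith, Or.inl rfl⟩
  | succ s has ih =>
    obtain ⟨b, hab, hbs, hle, hor⟩ := ih fun i hi => hc i (by simp at hi ⊢; omega)
    by_cases hb : B ≤ ∑ i ∈ Finset.Icc (a + 1) b, c i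
    · exact ⟨b, hab, by omega, hle, Or.inr hb⟩
    · obtain rfl := hor.resolve_right hb
      refine ⟨b + 1, by omega, le_rfl, ?_, Or.inl rfl⟩
      rw [← sum_Icc_split c hab (Nat.le_succ b)]
      have := hc (b + 1) (by simp)
      simp only [Finset.Icc_self, Finset.sum_singleton]
      linarith

/-- If the robots `1, …, k` do no work beyond module `s`, then the work beyond `s` is bounded by the
total budget of the remaining robots. -/
lemma tail_work_le (n m k s : ℕ) (c : ℕ → ℝ) (T : ℕ → ℕ → ℝ) (B : ℕ → ℝ)
    (hT : ∀ r ∈ Finset.Icc 1 m, ∀ i ∈ Finset.Icc 1 n, 0 ≤ T r i)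
    (hcov : ∀ i ∈ Finset.Icc 1 n, c i ≤ ∑ r ∈ Finset.Icc 1 m, T r i)
    (hB : ∀ r ∈ Finset.Icc 1 m, ∑ i ∈ Finset.Icc 1 n, T r i ≤ B r) (hk : k ≤ m)
    (hzero : ∀ r ∈ Finset.Icc 1 k, ∀ i, s < i → T r i = 0) :
    ∑ i ∈ Finset.Icc (s + 1) n, c i ≤ ∑ r ∈ Finset.Icc (k + 1) m, B r := by
  calc ∑ i ∈ Finset.Icc (s + 1) n, c i
      ≤ ∑ i ∈ Finset.Icc (s + 1) n, ∑ r ∈ Finset.Icc (k + 1) m, T r i := by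
        refine Finset.sum_le_sum fun i hi => ?_
        rw [Finset.mem_Icc] at hi
        have h1 := hcov i (by simp; omega)
        have h2 := sum_Icc_split (fun r => T r i) (Nat.zero_le k) hk
        have h3 : ∑ r ∈ Finset.Icc (0 + 1) k, T r i = 0 :=
          Finset.sum_eq_zero fun r hr => hzero r hr i (by omega)
        simp only [zero_add] at h2 h3
        linarith
    _ = ∑ r ∈ Finset.Icc (k + 1) m, ∑ i ∈ Finset.Icc (s + 1) n, T r i := Finset.sum_comm
    _ ≤ ∑ r ∈ Finset.Icc (k + 1) m, B r := by
        refine Finset.sum_le_sum fun r hr => ?_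
        have hr' : r ∈ Finset.Icc 1 m := by simp at hr ⊢; omega
        refine le_trans ?_ (hB r hr')
        refine Finset.sum_le_sum_of_subset_of_nonneg ?_ fun i hi _ => hT r hr' i hi
        exact Finset.Icc_subset_Icc (by omega) le_rfl

/-- The greedy assignment for the first `k` robots, with the invariant that the remaining work fits
into the total budget of the remaining robots. -/
lemma exists_endpoints (n m : ℕ) (c : ℕ → ℝ) (T : ℕ → ℕ → ℝ) (B : ℕ → ℝ) (C : ℝ) (σ : ℕ → ℕ)
    (hC0 : 0 ≤ C) (hC : ∀ i ∈ Finset.Icc 1 n, c i ≤ C)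
    (hT : ∀ r ∈ Finset.Icc 1 m, ∀ i ∈ Finset.Icc 1 n, 0 ≤ T r i)
    (hcov : ∀ i ∈ Finset.Icc 1 n, c i ≤ ∑ r ∈ Finset.Icc 1 m, T r i)
    (hB : ∀ r ∈ Finset.Icc 1 m, ∑ i ∈ Finset.Icc 1 n, T r i ≤ B r)
    (hσle : ∀ r ∈ Finset.Icc 1 m, σ r ≤ n)
    (hσzero : ∀ r ∈ Finset.Icc 1 m, ∀ i, σ r < i → T r i = 0)
    (hσmono : ∀ r r', 1 ≤ r → r ≤ r' → r' ≤ m → σ r ≤ σ r')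
    (k : ℕ) (hk : k ≤ m) :
    ∃ e : ℕ → ℕ, Monotone e ∧ e 0 = 0 ∧ e k ≤ n ∧
      (∀ r, k ≤ r → 1 ≤ r → r ≤ m → e k ≤ σ r) ∧
      (∀ r ∈ Finset.Icc 1 k, e r ≤ σ r ∧
        ∑ i ∈ Finset.Icc (e (r - 1) + 1) (e r), c i ≤ B r + C) ∧
      ∑ i ∈ Finset.Icc (e k + 1) n, c i ≤ ∑ r ∈ Finset.Icc (k + 1) m, B r := by
  induction k with
  | zero =>
    exact ⟨fun _ => 0, monotone_const, rfl, Nat.zero_le _, fun _ _ _ _ => Nat.zero_le _,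
      fun r hr => by simp at hr,
      tail_work_le n m 0 0 c T B hT hcov hB hk fun r hr => by simp at hr⟩
  | succ k ih =>
    obtain ⟨e, hmono, he0, hen, heσ, hcost, hinv⟩ := ih (by omega)
    have hk1 : k + 1 ∈ Finset.Icc 1 m := by simp; omega
    have hσn := hσle _ hk1
    have hB0 : 0 ≤ B (k + 1) :=
      (Finset.sum_nonneg fun i hi => hT _ hk1 i hi).trans (hB _ hk1)
    obtain ⟨b, hab, hbs, hle, hor⟩ := exists_endpoint c C (B (k + 1)) hC0 hB0 (e k) (σ (k + 1))
      (heσ _ (by omega) (by omega) hk) fun i hi => hC i (by simp at hi ⊢; omega)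
    refine ⟨fun r => if r ≤ k then e r else b, ?_, by simp [he0], ?_, ?_, ?_, ?_⟩
    · intro x y hxy
      dsimp only
      split_ifs with hx hy hy
      · exact hmono hxy
      · exact (hmono hx).trans hab
      · omega
      · exact le_rfl
    · simp; omega
    · intro r h1 h2 h3
      have := hσmono (k + 1) r (by omega) h1 h3
      simp; omega
    · intro r hr
      rw [Finset.mem_Icc] at hr
      by_cases hrk : r ≤ k
      · have hr1 : r - 1 ≤ k := by omega
        simp only [hrk, hr1, if_true]
        exact hcost r (by simp; omega)
      · obtain rfl : r = k + 1 := by omega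
        simpa using ⟨hbs, hle⟩
    · simp only [Nat.not_succ_le_self, if_false]
      rcases hor with rfl | hge
      · refine tail_work_le n m (k + 1) _ c T B hT hcov hB hk fun r hr i hi => ?_
        rw [Finset.mem_Icc] at hr
        exact hσzero r (by simp; omega) i
          ((hσmono r (k + 1) hr.1 hr.2 hk).trans_lt hi)
      · have h1 := sum_Icc_split c hab (hbs.trans hσn)
        have h2 := sum_Icc_split B (Nat.le_succ k) hk
        simp only [Nat.succ_eq_add_one, Finset.Icc_self, Finset.sum_singleton] at h2
        linarith

/-- Theorem 1: there exists an integer solution whose makespan is at most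
`(1 + δ/2)` times the optimal makespan `M`, where
`δ = (max_i c i) / (∑ h d h)` is the shape index of the environment. -/
theorem int_solution_multiplicative_bound (n m : ℕ) (hn : 1 ≤ n) (hm : 1 ≤ m)
    (c d : ℕ → ℝ)
    (hc : ∀ i ∈ Finset.Icc 1 n, 0 < c i)
    (hd : ∀ h ∈ Finset.Icc 1 (n - 1), 0 ≤ d h)
    (hL : 0 < ∑ h ∈ Finset.Icc 1 (n - 1), d h)
    (T : ℕ → ℕ → ℝ)
    (hT : ∀ r ∈ Finset.Icc 1 m, ∀ i ∈ Finset.Icc 1 n, 0 ≤ T r i)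
    (hcov : ∀ i ∈ Finset.Icc 1 n, c i ≤ ∑ r ∈ Finset.Icc 1 m, T r i)
    (σ : ℕ → ℕ)
    (hσle : ∀ r ∈ Finset.Icc 1 m, σ r ≤ n)
    (hσzero : ∀ r ∈ Finset.Icc 1 m, ∀ i, σ r < i → T r i = 0)
    (hσmono : ∀ r r', 1 ≤ r → r ≤ r' → r' ≤ m → σ r ≤ σ r')
    (M : ℝ)
    (hM2L : 2 * ∑ h ∈ Finset.Icc 1 (n - 1), d h ≤ M)
    (hM : ∀ r ∈ Finset.Icc 1 m,
      (∑ i ∈ Finset.Icc 1 n, T r i) + 2 * ∑ h ∈ Finset.Icc 1 (σ r - 1), d h ≤ M) :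
    f c d 1 n m ≤
      (1 + ((Finset.Icc 1 n).sup' (Finset.nonempty_Icc.mpr hn) c /
        (∑ h ∈ Finset.Icc 1 (n - 1), d h)) / 2) * M := by
  set L := ∑ h ∈ Finset.Icc 1 (n - 1), d h with hLdef
  set C := (Finset.Icc 1 n).sup' (Finset.nonempty_Icc.mpr hn) c with hCdef
  have hC : ∀ i ∈ Finset.Icc 1 n, c i ≤ C := fun i hi => Finset.le_sup' c hi
  have hC0 : 0 ≤ C := by
    have h1 : 1 ∈ Finset.Icc 1 n := by simp; omega
    exact (hc 1 h1).le.trans (hC 1 h1)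
  obtain ⟨e, hmono, he0, hen, -, hcost, hinv⟩ := exists_endpoints n m c T
    (fun r => M - 2 * ∑ h ∈ Finset.Icc 1 (σ r - 1), d h) C σ hC0 hC hT hcov
    (fun r hr => by have := hM r hr; linarith) hσle hσzero hσmono m le_rfl
  -- No budget is left after robot `m`, so no module of positive work can be left either.
  have hem : e m = n := by
    by_contra hne
    have hpos : 0 < ∑ i ∈ Finset.Icc (e m + 1) n, c i :=
      Finset.sum_pos (fun i hi => hc i (by simp at hi ⊢; omega))
        (Finset.nonempty_Icc.mpr (by omega))
    simp only [Finset.Icc_eq_empty (by omega : ¬ m + 1 ≤ m), Finset.sum_empty] at hinv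
    linarith
  have hspan : intMakespan c d m e ≤ M + C := by
    unfold intMakespan
    rw [Finset.fold_max_le]
    refine ⟨by linarith, fun r hr => ?_⟩
    obtain ⟨hσ, hr2⟩ := hcost r hr
    have hσn := hσle r hr
    unfold tourCost
    split_ifs
    · have hD : ∑ h ∈ Finset.Icc 1 (e r - 1), d h ≤ ∑ h ∈ Finset.Icc 1 (σ r - 1), d h :=
        Finset.sum_le_sum_of_subset_of_nonneg (Finset.Icc_subset_Icc le_rfl (by omega))
          fun i hi _ => hd i (by simp at hi ⊢; omega)
      linarith
    · linarith
  have hf : f c d 1 n m ≤ intMakespan c d m e := by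
    refine csInf_le ⟨0, ?_⟩ ⟨e, hmono, by simpa using he0, hem, rfl⟩
    rintro _ ⟨e', -, -, -, rfl⟩
    unfold intMakespan
    rw [Finset.le_fold_max]
    exact Or.inl le_rfl
  have hδ : C ≤ C / L / 2 * M := by
    calc C = C / L / 2 * (2 * L) := by field_simp
      _ ≤ C / L / 2 * M := by gcongr
  linarith
end

section
/- Let α ≥ 1 and let c, c' : {1,…,n} → ℝ be module coverage times with 0 ≤ c'(i) ≤ α·c(i) for every i (c' being the tour lengths produced by an α-approximation algorithm for the TSP on each module, c the optimal ones). Denote by f_{c'} and f_c the optimal integer makespans computed with coverage times c' and c respectively (with the same doorway distances d(h) ≥ 0). Then for every m ≥ 1: f_{c'}(1,n,m) ≤ α·f_c(1,n,m). (This is the key step of the approximation theorem: using α-approximate module coverage times degrades the best integer solution by at most a factor α, since no other approximated information is introduced after the module tours are computed.) -/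
theorem tourCost_le_mul {n : ℕ} {c c' d : ℕ → ℝ} {α : ℝ} (hα : 1 ≤ α)
    (hd : ∀ h ∈ Finset.Icc 1 (n - 1), 0 ≤ d h)
    (hc' : ∀ i ∈ Finset.Icc 1 n, c' i ≤ α * c i) {a b : ℕ} (hb : b ≤ n) :
    tourCost c' d a b ≤ α * tourCost c d a b := by
  unfold tourCost
  split_ifs with hab
  · have hcov : ∑ h ∈ Finset.Icc (a + 1) b, c' h ≤ α * ∑ h ∈ Finset.Icc (a + 1) b, c h := by
      rw [Finset.mul_sum]
      refine Finset.sum_le_sum fun i hi => hc' i ?_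
      simp only [Finset.mem_Icc] at hi ⊢
      omega
    have htravel : 0 ≤ ∑ h ∈ Finset.Icc 1 (b - 1), d h := by
      refine Finset.sum_nonneg fun i hi => hd i ?_
      simp only [Finset.mem_Icc] at hi ⊢
      omega
    nlinarith [mul_nonneg (sub_nonneg.2 hα) htravel]
  · simp

theorem intMakespan_nonneg (c d : ℕ → ℝ) (k : ℕ) (e : ℕ → ℕ) : 0 ≤ intMakespan c d k e :=
  (Finset.le_fold_max 0).2 (Or.inl le_rfl)

theorem intMakespan_le_mul {n m : ℕ} {c c' d : ℕ → ℝ} {α : ℝ} (hα : 1 ≤ α)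
    (hd : ∀ h ∈ Finset.Icc 1 (n - 1), 0 ≤ d h)
    (hc' : ∀ i ∈ Finset.Icc 1 n, c' i ≤ α * c i) {e : ℕ → ℕ} (he : Monotone e) (hem : e m = n) :
    intMakespan c' d m e ≤ α * intMakespan c d m e := by
  have hα0 : 0 ≤ α := zero_le_one.trans hα
  refine (Finset.fold_max_le _).2 ⟨mul_nonneg hα0 (intMakespan_nonneg c d m e), fun r hr => ?_⟩
  have hrn : e r ≤ n := hem ▸ he (Finset.mem_Icc.1 hr).2
  refine (tourCost_le_mul hα hd hc' hrn).trans (mul_le_mul_of_nonneg_left ?_ hα0)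
  exact (Finset.le_fold_max _).2 (Or.inr ⟨r, hr, le_rfl⟩)

/-- Using `α`-approximate module coverage times `c'` (with `c' i ≤ α * c i`)
degrades the best integer solution by at most a factor `α`:
`f_{c'} 1 n m ≤ α * f_c 1 n m`. -/
theorem f_approx_coverage_times (n m : ℕ) (hn : 1 ≤ n) (hm : 1 ≤ m)
    (c c' d : ℕ → ℝ) (α : ℝ) (hα : 1 ≤ α)
    (hc : ∀ i ∈ Finset.Icc 1 n, 0 ≤ c i)
    (hd : ∀ h ∈ Finset.Icc 1 (n - 1), 0 ≤ d h)
    (hc' : ∀ i ∈ Finset.Icc 1 n, 0 ≤ c' i ∧ c' i ≤ α * c i) :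
    f c' d 1 n m ≤ α * f c d 1 n m := by
  have hα0 : 0 < α := zero_lt_one.trans_le hα
  rw [← div_le_iff₀' hα0]
  unfold f
  -- A split must exist, since `sInf ∅ = 0` would make the right-hand side meaningless:
  -- the first robot can take all `n` modules.
  refine le_csInf ⟨_, fun r => if r = 0 then 0 else n, ?_, by simp, ?_, rfl⟩ ?_
  · intro a b hab
    dsimp only
    split_ifs <;> omega
  · exact if_neg (by omega)
  · rintro M ⟨e, he, he0, hem, rfl⟩
    rw [div_le_iff₀' hα0]
    refine le_trans (csInf_le ?_ ?_)
      (intMakespan_le_mul hα hd (fun i hi => (hc' i hi).2) he hem)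
    · refine ⟨0, ?_⟩
      rintro _ ⟨e', -, -, -, rfl⟩
      exact intMakespan_nonneg c' d m e'
    · exact ⟨e, he, he0, hem, rfl⟩
end
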